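/- arXiv:1210.8121 — 2 statements merged into one kernel-verified Lean document; each statement's English description precedes it below -/
import Mathlib

section
/- Let E be a finite-dimensional complex normed space, let T ⊆ E be a totally real real-linear subspace, and let τ : E → ℝ be a function that is twice Fréchet-differentiable at a point x ∈ E and satisfies: τ ≥ 0 on some neighborhood of x, τ(x) = 0, and D²τ(x)(v, v) > 0 for every v ∈ E with v ∉ T. Then τ is strongly plurisubharmonic at x, i.e. L_τ(x; v) > 0 for every v ≠ 0. -/
open Topology

/-- The Levi form of a function `ρ : E → ℝ` on a complex normed space `E` at a
point `x`, evaluated on a vector `v`: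
`L_ρ(x; v) = (1/4)(D²ρ(x)(v,v) + D²ρ(x)(iv,iv))`,
where `D²ρ(x)` is the second real Fréchet derivative. -/
noncomputable def leviForm {E : Type*} [NormedAddCommGroup E] [NormedSpace ℂ E]
    (ρ : E → ℝ) (x v : E) : ℝ :=
  (1/4) * (fderiv ℝ (fderiv ℝ ρ) x v v
    + fderiv ℝ (fderiv ℝ ρ) x (Complex.I • v) (Complex.I • v))

/-! The complement of a proper real subspace is dense, so a continuous function that is positive
off such a subspace `T` is nonnegative everywhere; apply this to `v ↦ D²τ(x)(v, v)`. If `T` is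
totally real and `v ≠ 0`, then one of `v` and `i • v` lies outside `T`, so of the two summands of
the Levi form one is positive and the other nonnegative. -/

section DenseComplement

variable {R M α : Type*} [Ring R] [TopologicalSpace R] [(𝓝[{r : R | IsUnit r}] 0).NeBot]
  [AddCommGroup M] [TopologicalSpace M] [ContinuousAdd M] [Module R M] [ContinuousSMul R M]
  {N : Submodule R M}

theorem dense_compl_submodule (hN : N ≠ ⊤) : Dense (N : Set M)ᶜ := by
  rw [← interior_eq_empty_iff_dense_compl, ← Set.not_nonempty_iff_eq_empty]
  exact fun h ↦ hN (N.eq_top_of_nonempty_interior' h)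

theorem le_of_forall_notMem_submodule_le [TopologicalSpace α] [Preorder α] [OrderClosedTopology α]
    (hN : N ≠ ⊤) {f g : M → α} (hf : Continuous f) (hg : Continuous g)
    (hfg : ∀ m ∉ N, f m ≤ g m) (m : M) : f m ≤ g m :=
  le_on_closure hfg hf.continuousOn hg.continuousOn (dense_compl_submodule hN m)

end DenseComplement

/-- A real-linear subspace `T` of a complex vector space is totally real if `T ∩ iT = {0}`. As
`iT = {u | i • u ∈ T}`, membership of `v` in `iT` is written as `i • v ∈ T`. -/
def IsTotallyReal {E : Type*} [AddCommGroup E] [Module ℂ E] (T : Submodule ℝ E) : Prop :=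
  ∀ v ∈ T, Complex.I • v ∈ T → v = 0

theorem IsTotallyReal.ne_top {E : Type*} [AddCommGroup E] [Module ℂ E] [Nontrivial E]
    {T : Submodule ℝ E} (hT : IsTotallyReal T) : T ≠ ⊤ := by
  rintro rfl
  obtain ⟨v, hv⟩ := exists_ne (0 : E)
  exact hv (hT v Submodule.mem_top Submodule.mem_top)

theorem IsTotallyReal.add_smul_I_pos {E : Type*} [AddCommGroup E] [Module ℂ E]
    [TopologicalSpace E] [ContinuousAdd E] [ContinuousSMul ℝ E] {T : Submodule ℝ E}
    (hT : IsTotallyReal T) {f : E → ℝ} (hf : Continuous f) (hpos : ∀ v ∉ T, 0 < f v)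
    {v : E} (hv : v ≠ 0) : 0 < f v + f (Complex.I • v) := by
  have : Nontrivial E := nontrivial_of_ne v 0 hv
  have f_nonneg : ∀ u, 0 ≤ f u :=
    le_of_forall_notMem_submodule_le hT.ne_top continuous_const hf fun u hu ↦ (hpos u hu).le
  by_cases hvT : v ∈ T
  · have hIvT : Complex.I • v ∉ T := fun hIv ↦ hv (hT v hvT hIv)
    exact add_pos_of_nonneg_of_pos (f_nonneg v) (hpos _ hIvT)
  · exact add_pos_of_pos_of_nonneg (hpos v hvT) (f_nonneg _)

section LeviForm

variable {E : Type*} [NormedAddCommGroup E] [NormedSpace ℂ E] {τ : E → ℝ} {x : E}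
  {τ' : E → E →L[ℝ] ℝ} {B : E →L[ℝ] E →L[ℝ] ℝ}

theorem leviForm_eq_of_hasFDerivAt (hτ : ∀ᶠ y in 𝓝 x, HasFDerivAt τ (τ' y) y)
    (hτ' : HasFDerivAt τ' B x) (v : E) :
    leviForm τ x v = (1 / 4) * (B v v + B (Complex.I • v) (Complex.I • v)) := by
  have fderiv_eq : fderiv ℝ τ =ᶠ[𝓝 x] τ' := hτ.mono fun _ hy ↦ hy.fderiv
  rw [leviForm, fderiv_eq.fderiv_eq, hτ'.fderiv]

theorem strongly_psh_of_nonneg_vanishing_hessian_pos_off_totally_real_general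
    {T : Submodule ℝ E} (hT : IsTotallyReal T) (hτ : ∀ᶠ y in 𝓝 x, HasFDerivAt τ (τ' y) y)
    (hτ' : HasFDerivAt τ' B x) (hpos : ∀ v ∉ T, 0 < B v v) {v : E} (hv : v ≠ 0) :
    0 < leviForm τ x v := by
  have hB : Continuous fun u ↦ B u u := by fun_prop
  rw [leviForm_eq_of_hasFDerivAt hτ hτ']
  exact mul_pos (by norm_num) (hT.add_smul_I_pos hB hpos hv)

end LeviForm

/-- Let `T` be a totally real real-linear subspace of a
finite-dimensional complex normed space `E` and `τ : E → ℝ` twice Fréchet-differentiable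
at `x` (differentiable near `x`, with `fderiv` differentiable at `x`), with `τ ≥ 0`
near `x`, `τ(x) = 0`, and `D²τ(x)(v,v) > 0` for every `v ∉ T`. Then `τ` is strongly
plurisubharmonic at `x`. -/
theorem strongly_psh_of_nonneg_vanishing_hessian_pos_off_totally_real
    {E : Type*} [NormedAddCommGroup E] [NormedSpace ℂ E] [FiniteDimensional ℂ E]
    (T : Submodule ℝ E) (hT : ∀ v ∈ T, Complex.I • v ∈ T → v = 0)
    (τ : E → ℝ) (x : E)
    (h1 : ∀ᶠ y in 𝓝 x, DifferentiableAt ℝ τ y)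
    (h2 : DifferentiableAt ℝ (fderiv ℝ τ) x)
    (hnn : ∀ᶠ y in 𝓝 x, 0 ≤ τ y)
    (hx0 : τ x = 0)
    (hpos : ∀ v : E, v ∉ T → 0 < fderiv ℝ (fderiv ℝ τ) x v v) :
    ∀ v : E, v ≠ 0 → 0 < leviForm τ x v := fun _ hv ↦
  strongly_psh_of_nonneg_vanishing_hessian_pos_off_totally_real_general hT
    (h1.mono fun _ hy ↦ hy.hasFDerivAt) h2.hasFDerivAt hpos hv
end

section
/- Let E be a finite-dimensional complex normed space, U ⊆ E an open set, K ⊆ U a compact set, and ρ, φ : E → ℝ functions that are C² on U. Assume that the Levi form L_ρ(x; ·) is positive semidefinite (L_ρ(x; v) ≥ 0 for all v) at every x ∈ K, and that for every x ∈ K at least one of the two Levi forms L_ρ(x; ·), L_φ(x; ·) is positive definite. Then there exists a constant c > 0 such that the function ρ + c·φ is strongly plurisubharmonic at every point of K. -/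
open Topology

/-!
Levi forms are homogeneous of degree two in `v`, so only pairs `(x, v)` with `x ∈ K` and `‖v‖ = 1`
matter, and these form a compact set. Near a pair with `L_ρ(x; v) > 0` the perturbation `c L_φ` is
harmless for small `c`; near a pair with `L_φ(x; v) > 0` every `c > 0` works because `L_ρ ≥ 0`.
-/

open Filter Metric Set

theorem eventually_forall_pos_add_mul_of_isCompact {X : Type*} [TopologicalSpace X] {S : Set X}
    (hS : IsCompact S) {f g : X → ℝ} (hf : ContinuousOn f S) (hg : ContinuousOn g S)
    (hf_nonneg : ∀ p ∈ S, 0 ≤ f p) (hpos : ∀ p ∈ S, 0 < f p ∨ 0 < g p) :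
    ∀ᶠ c in 𝓝[>] (0 : ℝ), ∀ p ∈ S, 0 < f p + c * g p := by
  have locally_pos : ∀ p ∈ S, ∀ᶠ z in 𝓝[Ioi 0 ×ˢ S] ((0 : ℝ), p), 0 < f z.2 + z.1 * g z.2 := by
    intro p hp
    have tendsto_snd : Tendsto Prod.snd (𝓝[Ioi 0 ×ˢ S] ((0 : ℝ), p)) (𝓝[S] p) :=
      continuous_snd.continuousWithinAt.tendsto_nhdsWithin fun _ hz ↦ hz.2
    have tendsto_fst : Tendsto Prod.fst (𝓝[Ioi 0 ×ˢ S] ((0 : ℝ), p)) (𝓝 0) :=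
      continuous_fst.continuousWithinAt
    have tendsto_f := (hf p hp).tendsto.comp tendsto_snd
    have tendsto_g := (hg p hp).tendsto.comp tendsto_snd
    rcases hpos p hp with hfp | hgp
    · exact (tendsto_f.add (tendsto_fst.mul tendsto_g)).eventually_const_lt (by simpa using hfp)
    · filter_upwards [tendsto_g.eventually_const_lt hgp, self_mem_nhdsWithin] with z hgz hz
      exact add_pos_of_nonneg_of_pos (hf_nonneg z.2 hz.2) (mul_pos hz.1 hgz)
  have near_zero := hS.eventually_forall_of_forall_eventually
    (P := fun c p ↦ (c, p) ∈ Ioi 0 ×ˢ S → 0 < f p + c * g p)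
    fun p hp ↦ eventually_nhdsWithin_iff.1 (locally_pos p hp)
  filter_upwards [near_zero.filter_mono nhdsWithin_le_nhds, self_mem_nhdsWithin] with c h hc p hp
  exact h p hp ⟨hc, hp⟩

section LeviForm

variable {E : Type*} [NormedAddCommGroup E] [NormedSpace ℂ E] {ρ φ : E → ℝ} {x v : E}

-- The mixed terms `D²ρ(x)(v, iv)` and `D²ρ(x)(iv, v)` cancel in the sum.
theorem leviForm_smul_right (ρ : E → ℝ) (x : E) (a : ℂ) (v : E) :
    leviForm ρ x (a • v) = ‖a‖ ^ 2 * leviForm ρ x v := by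
  have smul_eq : a • v = a.re • v + a.im • Complex.I • v := by
    conv_lhs => rw [← Complex.re_add_im a]
    simp only [add_smul, mul_smul, Complex.coe_smul]
  have I_smul_eq : Complex.I • a • v = a.re • Complex.I • v - a.im • v := by
    rw [smul_eq, smul_add, smul_comm Complex.I a.re, smul_comm Complex.I a.im, smul_smul Complex.I,
      Complex.I_mul_I, neg_one_smul, smul_neg, sub_eq_add_neg]
  rw [leviForm, leviForm, I_smul_eq, smul_eq, Complex.sq_norm, Complex.normSq_apply]
  simp only [map_add, map_sub, map_smul, add_apply, sub_apply, smul_apply, smul_eq_mul]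
  ring

theorem leviForm_pos_of_forall_mem_sphere (h : ∀ u ∈ sphere (0 : E) 1, 0 < leviForm ρ x u)
    (hv : v ≠ 0) : 0 < leviForm ρ x v := by
  have hunit : ((‖v‖⁻¹ : ℝ) : ℂ) • v ∈ sphere (0 : E) 1 := by
    simp [norm_smul, hv]
  have hscaled := h _ hunit
  rw [leviForm_smul_right] at hscaled
  exact pos_of_mul_pos_right hscaled (sq_nonneg _)

theorem leviForm_add (hρ : ContDiffAt ℝ 2 ρ x) (hφ : ContDiffAt ℝ 2 φ x) (v : E) :
    leviForm (ρ + φ) x v = leviForm ρ x v + leviForm φ x v := by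
  have fderiv_eventuallyEq : fderiv ℝ (ρ + φ) =ᶠ[𝓝 x] fderiv ℝ ρ + fderiv ℝ φ := by
    filter_upwards [hρ.eventually (by simp), hφ.eventually (by simp)] with y hρy hφy
    exact fderiv_add (hρy.differentiableAt two_ne_zero) (hφy.differentiableAt two_ne_zero)
  have differentiableAt_fderiv {f : E → ℝ} (hf : ContDiffAt ℝ 2 f x) :
      DifferentiableAt ℝ (fderiv ℝ f) x :=
    (hf.fderiv_right (m := 1) one_add_one_eq_two.le).differentiableAt one_ne_zero
  rw [leviForm, leviForm, leviForm, fderiv_eventuallyEq.fderiv_eq,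
    fderiv_add (differentiableAt_fderiv hρ) (differentiableAt_fderiv hφ)]
  simp only [add_apply]
  ring

theorem leviForm_const_smul (c : ℝ) (φ : E → ℝ) (x v : E) :
    leviForm (c • φ) x v = c * leviForm φ x v := by
  rw [leviForm, leviForm, fderiv_const_smul_field, fderiv_const_smul_field (f := fderiv ℝ φ)]
  simp only [Pi.smul_apply, smul_apply, smul_eq_mul]
  ring

theorem continuousAt_leviForm (hρ : ContDiffAt ℝ 2 ρ x) (v : E) :
    ContinuousAt (fun p : E × E ↦ leviForm ρ p.1 p.2) (x, v) := by
  have hD2 : ContinuousAt (fun p : E × E ↦ fderiv ℝ (fderiv ℝ ρ) p.1) (x, v) :=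
    ((hρ.fderiv_right (m := 1) one_add_one_eq_two.le).fderiv_right (m := 0)
      (zero_add 1).le).continuousAt.comp continuousAt_fst
  unfold leviForm
  fun_prop

theorem strongly_psh_add_small_multiple_general [FiniteDimensional ℂ E] {K : Set E}
    (hK : IsCompact K) (hρ : ∀ x ∈ K, ContDiffAt ℝ 2 ρ x) (hφ : ∀ x ∈ K, ContDiffAt ℝ 2 φ x)
    (hpsd : ∀ x ∈ K, ∀ v : E, 0 ≤ leviForm ρ x v)
    (hpos : ∀ x ∈ K, ∀ v : E, v ≠ 0 → 0 < leviForm ρ x v ∨ 0 < leviForm φ x v) :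
    ∀ᶠ c in 𝓝[>] (0 : ℝ),
      ∀ x ∈ K, ∀ v : E, v ≠ 0 → 0 < leviForm (fun y ↦ ρ y + c * φ y) x v := by
  have : ProperSpace E := FiniteDimensional.proper ℂ E
  have continuousOn_leviForm {f : E → ℝ} (hf : ∀ x ∈ K, ContDiffAt ℝ 2 f x) :
      ContinuousOn (fun p : E × E ↦ leviForm f p.1 p.2) (K ×ˢ sphere 0 1) :=
    fun p hp ↦ (continuousAt_leviForm (hf p.1 hp.1) p.2).continuousWithinAt
  filter_upwards [eventually_forall_pos_add_mul_of_isCompact (hK.prod (isCompact_sphere 0 1))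
    (continuousOn_leviForm hρ) (continuousOn_leviForm hφ) (fun p hp ↦ hpsd p.1 hp.1 p.2)
    (fun p hp ↦ hpos p.1 hp.1 p.2 (ne_of_mem_sphere hp.2 one_ne_zero))] with c hc x hx v hv
  refine leviForm_pos_of_forall_mem_sphere (fun u hu ↦ ?_) hv
  calc
    0 < leviForm ρ x u + c * leviForm φ x u := hc (x, u) ⟨hx, hu⟩
    _ = leviForm (ρ + c • φ) x u := by
      rw [leviForm_add (φ := c • φ) (hρ x hx) ((hφ x hx).const_smul c), leviForm_const_smul]

end LeviForm

/-- Let `K` be a compact subset of an open set `U` in a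
finite-dimensional complex normed space and `ρ, φ` be `C²` on `U`. If the Levi form
of `ρ` is positive semidefinite at every point of `K`, and at every point of `K` at
least one of the Levi forms of `ρ`, `φ` is positive definite, then for some constant
`c > 0` the function `ρ + c·φ` is strongly plurisubharmonic at every point of `K`. -/
theorem strongly_psh_add_small_multiple
    {E : Type*} [NormedAddCommGroup E] [NormedSpace ℂ E] [FiniteDimensional ℂ E]
    (U : Set E) (hU : IsOpen U) (K : Set E) (hK : IsCompact K) (hKU : K ⊆ U)
    (ρ φ : E → ℝ) (hρ : ContDiffOn ℝ 2 ρ U) (hφ : ContDiffOn ℝ 2 φ U)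
    (hpsd : ∀ x ∈ K, ∀ v : E, 0 ≤ leviForm ρ x v)
    (hpos : ∀ x ∈ K, (∀ v : E, v ≠ 0 → 0 < leviForm ρ x v) ∨
      (∀ v : E, v ≠ 0 → 0 < leviForm φ x v)) :
    ∃ c : ℝ, 0 < c ∧
      ∀ x ∈ K, ∀ v : E, v ≠ 0 → 0 < leviForm (fun y => ρ y + c * φ y) x v := by
  have eventually_pos := strongly_psh_add_small_multiple_general hK
    (fun x hx ↦ hρ.contDiffAt (hU.mem_nhds (hKU hx)))
    (fun x hx ↦ hφ.contDiffAt (hU.mem_nhds (hKU hx)))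
    hpsd (fun x hx v hv ↦ (hpos x hx).imp (· v hv) (· v hv))
  exact (eventually_mem_nhdsWithin.and eventually_pos).exists
end
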